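/- Let p, q ∈ ℚ[X] with q ≠ 0. Suppose that for every integer n ≥ 1 with q(n) ≠ 0 the value p(n)/q(n) is an integer. Then q divides p in ℚ[X] (equivalently, the rational function p/q is a polynomial). -/

import Mathlib

/-!
Divide with remainder, `p = q * s + r` with `deg r < deg q`, and let `b ≠ 0` be a common
denominator of the coefficients of `s`. Wherever `p(n) / q(n)` is an integer, so is
`b * r(n) / q(n) = b * p(n) / q(n) - b * s(n)`. This quantity tends to `0` as `n → ∞`, so its
integer values vanish for large `n`; hence `r` has infinitely many zeros and `r = 0`.
-/

open Filter Polynomial Topology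

theorem exists_forall_smul_eval_algebraMap_eq {R S : Type*} [CommRing R] [CommRing S] [Algebra R S]
    (M : Submonoid R) [IsLocalization M S] (f : S[X]) :
    ∃ b ∈ M, ∀ x : R, ∃ y : R, b • f.eval (algebraMap R S x) = algebraMap R S y := by
  obtain ⟨b, hbM, hb⟩ := IsLocalization.integerNormalization_spec M f
  refine ⟨b, hbM, fun x ↦ ⟨(IsLocalization.integerNormalization M f).eval x, ?_⟩⟩
  rw [← eval_smul, ← hb, eval_map_apply]

theorem eval_div_eval_eq_eval_div_add {K : Type*} [Field K] (p : K[X]) {q : K[X]} {x : K}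
    (hx : q.eval x ≠ 0) :
    p.eval x / q.eval x = (p / q).eval x + (p % q).eval x / q.eval x := by
  have hp : q.eval x * (p / q).eval x + (p % q).eval x = p.eval x := by
    rw [← eval_mul, ← eval_add, EuclideanDomain.div_add_mod]
  rw [← hp, add_div, mul_div_cancel_left₀ _ hx]

theorem eventually_eq_zero_of_eq_intCast_of_tendsto_zero {α R : Type*} [Ring R] [LinearOrder R]
    [IsStrictOrderedRing R] [TopologicalSpace R] [OrderTopology R] {l : Filter α} {u : α → R}
    (hu : Tendsto u l (𝓝 0)) :
    ∀ᶠ a in l, ∀ z : ℤ, u a = z → u a = 0 := by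
  have lower : ∀ᶠ a in l, -1 < u a := hu.eventually_const_lt (by simp)
  have upper : ∀ᶠ a in l, u a < 1 := hu.eventually_lt_const one_pos
  filter_upwards [lower, upper] with a ha_lower ha_upper z hz
  rw [hz] at ha_lower ha_upper ⊢
  have hz_abs : |z| < 1 := abs_lt.mpr ⟨by exact_mod_cast ha_lower, by exact_mod_cast ha_upper⟩
  rw [Int.abs_lt_one_iff.mp hz_abs, Int.cast_zero]

theorem eq_zero_of_frequently_eval_natCast_eq_zero {R : Type*} [CommRing R] [IsDomain R]
    [CharZero R] {p : R[X]} (hp : ∃ᶠ n : ℕ in atTop, p.eval (n : R) = 0) : p = 0 := by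
  have roots_infinite : ((Nat.cast : ℕ → R) '' {n | p.eval (n : R) = 0}).Infinite :=
    (Nat.frequently_atTop_iff_infinite.mp hp).image Nat.cast_injective.injOn
  exact eq_zero_of_infinite_isRoot p (roots_infinite.mono (Set.image_subset_iff.mpr fun _ hn ↦ hn))

theorem dvd_of_integer_valued_ratio_general (p q : ℚ[X])
    (h : ∃ᶠ n : ℕ in atTop, q.eval (n : ℚ) ≠ 0 ∧
      ∃ z : ℤ, p.eval (n : ℚ) / q.eval (n : ℚ) = (z : ℚ)) :
    q ∣ p := by
  obtain ⟨_, hq_eval, -⟩ := h.exists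
  have hq : q ≠ 0 := by rintro rfl; exact hq_eval eval_zero
  obtain ⟨b, hb_mem, hb⟩ := exists_forall_smul_eval_algebraMap_eq (nonZeroDivisors ℤ) (p / q)
  have hb_ne : (b : ℚ) ≠ 0 := Int.cast_ne_zero.mpr (nonZeroDivisors.ne_zero hb_mem)
  have remainder_tendsto :
      Tendsto (fun n : ℕ ↦ (b : ℚ) * ((p % q).eval (n : ℚ) / q.eval (n : ℚ))) atTop (𝓝 0) := by
    simpa using ((div_tendsto_atTop_zero_of_degree_lt _ _ (EuclideanDomain.mod_lt p hq)).comp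
      tendsto_natCast_atTop_atTop).const_mul (b : ℚ)
  refine EuclideanDomain.mod_eq_zero.mp (eq_zero_of_frequently_eval_natCast_eq_zero ?_)
  refine (h.and_eventually
    (eventually_eq_zero_of_eq_intCast_of_tendsto_zero remainder_tendsto)).mono ?_
  rintro n ⟨⟨hqn, z, hz⟩, eq_zero_of_eq_intCast⟩
  obtain ⟨y, hy⟩ : ∃ y : ℤ, (b : ℚ) * (p / q).eval (n : ℚ) = y := by simpa using hb n
  have remainder_eq : (b : ℚ) * ((p % q).eval (n : ℚ) / q.eval (n : ℚ)) = (b * z - y : ℤ) := by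
    push_cast
    rw [← hz, ← hy, eval_div_eval_eq_eval_div_add p hqn]
    ring
  simpa [hb_ne, hqn] using eq_zero_of_eq_intCast _ remainder_eq

/-- If a rational function `p/q` over `ℚ` takes integer values at all positive
integers (where `q` does not vanish), then `q` divides `p`, i.e. `p/q` is a
polynomial. -/
theorem dvd_of_integer_valued_ratio (p q : Polynomial ℚ) (hq : q ≠ 0)
    (h : ∀ n : ℕ, 1 ≤ n → q.eval (n : ℚ) ≠ 0 →
      ∃ z : ℤ, p.eval (n : ℚ) / q.eval (n : ℚ) = (z : ℚ)) :
    q ∣ p := by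
  have q_eval_ne : ∀ᶠ n : ℕ in atTop, q.eval (n : ℚ) ≠ 0 :=
    tendsto_natCast_atTop_atTop.eventually (eventually_atTop_not_isRoot q hq)
  refine dvd_of_integer_valued_ratio_general p q (Eventually.frequently ?_)
  filter_upwards [q_eval_ne, eventually_ge_atTop 1] with n hqn hn using ⟨hqn, h n hn hqn⟩
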